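/- Let m ≡ 1 (mod 3) be an integer. Then for every positive integer n, the 3-adic valuation of (1/n)·∑_{k=0}^{n-1} (−1)^k·C(n−1,k)·C(2k,k)/m^k is at least min{ν₃(n), ν₃(m−1)} − 1. -/

import Mathlib

/-!
Put `c k = C(2k,k) / 4 ^ k = (-1) ^ k C(-1/2, k)`, `n = N + 1` and `w = 1 - 4 / m`. The
Chu–Vandermonde identity turns the sum of the theorem into `∑_{i + j = N} c i * c j * w ^ i`, so the
quotient by `n` is `∑ A i j * w ^ i / (2 i + 1)` with `A i j = (2 i + 1) * c i * c j / (i + j + 1)`.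
The numbers `A i j` are `3`-adic integers, and both `A i j ≡ A 0 N` and `C(N, 2i) ≡ 1` hold modulo
`n`, up to a denominator of size `2 i + 1`. Since `w ≡ -3` modulo `m - 1`, the quotient is close to
`A 0 N * ∑ C(N, 2i) (-3) ^ i / (2 i + 1)`: the powers of `w` and `-3` absorb all denominators except
for one factor `3`. This last sum is `1 / n` times the coefficient of `√-3` in `(1 + √-3) ^ n`,
which vanishes for `3 ∣ n` because `(1 + √-3) ^ 3 = -8`.
-/

open Finset IsUltrametricDist

theorem sum_range_two_mul {M : Type*} [AddCommMonoid M] (f : ℕ → M) (n : ℕ) :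
    ∑ i ∈ range (2 * n), f i = ∑ i ∈ range n, (f (2 * i) + f (2 * i + 1)) := by
  induction n with
  | zero => simp
  | succ n ih => rw [mul_add_one, sum_range_succ, sum_range_succ, sum_range_succ, ih, add_assoc]

section BinomialRing

variable {R : Type*} [CommRing R] [BinomialRing R]

theorem succ_mul_ringChoose_succ (r : R) (k : ℕ) :
    (k + 1) * Ring.choose r (k + 1) = (r - k) * Ring.choose r k := by
  simpa [mul_comm] using Ring.choose_smul_choose r k.le_succ

theorem sum_antidiagonal_ringChoose_mul_one_add_pow (r s x : R) (n : ℕ) :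
    ∑ ij ∈ antidiagonal n, Ring.choose r ij.1 * Ring.choose s ij.2 * (1 + x) ^ ij.1 =
      ∑ kl ∈ antidiagonal n, Ring.choose r kl.1 * Ring.choose (r - kl.1 + s) kl.2 * x ^ kl.1 := by
  have expand_left (ij : ℕ × ℕ) :
      Ring.choose r ij.1 * Ring.choose s ij.2 * (1 + x) ^ ij.1 = ∑ kl ∈ antidiagonal ij.1,
        Ring.choose r kl.1 * Ring.choose (r - kl.1) kl.2 * Ring.choose s ij.2 * x ^ kl.1 := by
    rw [add_comm, (Commute.one_right x).add_pow', mul_sum]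
    refine sum_congr rfl fun kl hkl => ?_
    rw [HasAntidiagonal.mem_antidiagonal] at hkl
    have h := Ring.choose_smul_choose r (n := ij.1) (k := kl.1) (by lia)
    rw [show ij.1 - kl.1 = kl.2 by lia] at h
    rw [← h, one_pow, mul_one, nsmul_eq_mul, nsmul_eq_mul]
    ring
  have expand_right (kl : ℕ × ℕ) :
      Ring.choose r kl.1 * Ring.choose (r - kl.1 + s) kl.2 * x ^ kl.1 = ∑ ij ∈ antidiagonal kl.2,
        Ring.choose r kl.1 * Ring.choose (r - kl.1) ij.1 * Ring.choose s ij.2 * x ^ kl.1 := by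
    simp only [Ring.add_choose_eq _ (Commute.all (r - (kl.1 : R)) s), mul_sum, sum_mul, mul_assoc]
  simp only [expand_left, expand_right, sum_sigma']
  refine sum_nbij' (fun ⟨⟨_, j⟩, ⟨k, l⟩⟩ => ⟨(k, l + j), (l, j)⟩)
    (fun ⟨⟨k, _⟩, ⟨l, j⟩⟩ => ⟨(k + l, j), (k, l)⟩) ?_ ?_ ?_ ?_ ?_ <;>
    simp +contextual [add_assoc]
  grind

end BinomialRing

section CharZero

variable (K : Type*) [Field K]

/-- The normalized central binomial coefficient `C(2k,k) / 4 ^ k = (-1) ^ k C(-1/2, k)`, that is,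
the coefficient of `X ^ k` in `(1 - X) ^ (-1/2)`. -/
def scaledCentralBinom (k : ℕ) : K := k.centralBinom / 4 ^ k

/-- A two-variable analogue of the Catalan numbers, normalized by a power of `4`: for `i = 0` it is
`catalan j / 4 ^ j`. Its interest is that `c i * c j / (i + j + 1)`, with `c` the normalized central
binomial coefficients, acquires denominators dividing only `2 * i + 1`. -/
def scaledBicatalan (i j : ℕ) : K :=
  (2 * i + 1) * scaledCentralBinom K i * scaledCentralBinom K j / (i + j + 1 : ℕ)

variable {K} [CharZero K]

theorem scaledCentralBinom_succ (k : ℕ) :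
    scaledCentralBinom K (k + 1) = (2 * k + 1) / (2 * (k + 1)) * scaledCentralBinom K k := by
  have h : (k + 1) * ((k + 1).centralBinom : K) = 2 * (2 * k + 1) * k.centralBinom :=
    mod_cast k.succ_mul_centralBinom_succ
  have hk : (k + 1 : K) ≠ 0 := k.cast_add_one_ne_zero
  rw [scaledCentralBinom, scaledCentralBinom, pow_succ]
  field_simp
  linear_combination 2 * h

theorem scaledCentralBinom_eq_ringChoose (k : ℕ) :
    scaledCentralBinom K k = (-1) ^ k * Ring.choose (-1 / 2 : K) k := by
  induction k with
  | zero => simp [scaledCentralBinom]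
  | succ k ih =>
    have h := succ_mul_ringChoose_succ (-1 / 2 : K) k
    have hk : (k + 1 : K) ≠ 0 := k.cast_add_one_ne_zero
    rw [scaledCentralBinom_succ, ih, pow_succ]
    field_simp at h ⊢
    linear_combination h

theorem ringChoose_neg_natCast_sub_one (k l : ℕ) :
    Ring.choose (-k - 1 : K) l = (-1) ^ l * (k + l).choose k := by
  rw [← neg_add', Ring.choose_neg, show (k + 1 + l - 1 : K) = (k + l : ℕ) by push_cast; ring,
    Ring.choose_natCast, Nat.choose_symm_add]
  simp [Int.negOnePow_def, Units.smul_def]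

theorem sum_antidiagonal_scaledCentralBinom_mul_one_add_pow (x : K) (n : ℕ) :
    ∑ ij ∈ antidiagonal n, scaledCentralBinom K ij.1 * scaledCentralBinom K ij.2 * (1 + x) ^ ij.1 =
      ∑ k ∈ range (n + 1), n.choose k * scaledCentralBinom K k * x ^ k := by
  rw [← Nat.sum_antidiagonal_eq_sum_range_succ
    (fun k _ => (n.choose k : K) * scaledCentralBinom K k * x ^ k)]
  simp only [scaledCentralBinom_eq_ringChoose]
  calc
    _ = (-1) ^ n * ∑ ij ∈ antidiagonal n,
        Ring.choose (-1 / 2 : K) ij.1 * Ring.choose (-1 / 2 : K) ij.2 * (1 + x) ^ ij.1 := by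
      rw [mul_sum]
      refine sum_congr rfl fun ij hij => ?_
      rw [← HasAntidiagonal.mem_antidiagonal.1 hij, pow_add]
      ring
    _ = (-1) ^ n * ∑ kl ∈ antidiagonal n,
        Ring.choose (-1 / 2 : K) kl.1 * Ring.choose (-kl.1 - 1 : K) kl.2 * x ^ kl.1 := by
      rw [sum_antidiagonal_ringChoose_mul_one_add_pow]
      simp only [show ∀ k : K, -1 / 2 - k + -1 / 2 = -k - 1 by intro k; ring]
    _ = _ := by
      rw [mul_sum]
      refine sum_congr rfl fun kl hkl => ?_
      have sign : (-1 : K) ^ kl.2 * (-1) ^ kl.2 = 1 := by rw [← mul_pow]; simp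
      rw [ringChoose_neg_natCast_sub_one, ← HasAntidiagonal.mem_antidiagonal.1 hkl, pow_add]
      linear_combination (-1) ^ kl.1 * Ring.choose (-1 / 2 : K) kl.1 *
        (kl.1 + kl.2).choose kl.1 * x ^ kl.1 * sign

theorem sum_choose_mul_centralBinom_div_pow (m : K) (n : ℕ) :
    ∑ k ∈ range (n + 1), (-1) ^ k * (n.choose k : K) * ((2 * k).choose k : K) / m ^ k =
      ∑ ij ∈ antidiagonal n,
        scaledCentralBinom K ij.1 * scaledCentralBinom K ij.2 * (1 - 4 / m) ^ ij.1 := by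
  rw [sub_eq_add_neg, sum_antidiagonal_scaledCentralBinom_mul_one_add_pow]
  refine sum_congr rfl fun k _ => ?_
  rw [scaledCentralBinom, Nat.centralBinom, neg_div', div_pow, neg_pow (4 : K)]
  field_simp

theorem inv_mul_sum_choose_mul_centralBinom_div_pow (m : K) (n : ℕ) :
    ((n + 1 : ℕ) : K)⁻¹ *
        ∑ k ∈ range (n + 1), (-1) ^ k * (n.choose k : K) * ((2 * k).choose k : K) / m ^ k =
      ∑ ij ∈ antidiagonal n,
        ((2 * ij.1 + 1 : ℕ) : K)⁻¹ * (scaledBicatalan K ij.1 ij.2 * (1 - 4 / m) ^ ij.1) := by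
  rw [sum_choose_mul_centralBinom_div_pow, mul_sum]
  refine sum_congr rfl fun ij hij => ?_
  have hi : (2 * ij.1 + 1 : K) ≠ 0 := mod_cast (2 * ij.1).succ_ne_zero
  rw [scaledBicatalan, HasAntidiagonal.mem_antidiagonal.1 hij]
  push_cast
  field_simp

theorem inv_mul_sum_choose_odd_mul_pow (x : K) (n : ℕ) :
    ((n + 1 : ℕ) : K)⁻¹ * ∑ i ∈ range (n + 1), ((n + 1).choose (2 * i + 1) : K) * x ^ i =
      ∑ ij ∈ antidiagonal n, ((2 * ij.1 + 1 : ℕ) : K)⁻¹ * (n.choose (2 * ij.1) * x ^ ij.1) := by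
  rw [Nat.sum_antidiagonal_eq_sum_range_succ_mk, mul_sum]
  refine sum_congr rfl fun i _ => ?_
  have h : ((n + 1 : ℕ) : K) * n.choose (2 * i) =
      (n + 1).choose (2 * i + 1) * (2 * i + 1 : ℕ) := mod_cast n.add_one_mul_choose_eq (2 * i)
  have hn : ((n + 1 : ℕ) : K) ≠ 0 := mod_cast n.succ_ne_zero
  have hi : ((2 * i + 1 : ℕ) : K) ≠ 0 := mod_cast (2 * i).succ_ne_zero
  field_simp
  linear_combination - x ^ i * h

theorem scaledCentralBinom_sub_succ (k : ℕ) :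
    2 * (scaledCentralBinom K k - scaledCentralBinom K (k + 1)) =
      scaledCentralBinom K k / (k + 1 : ℕ) := by
  have hk : (k + 1 : K) ≠ 0 := k.cast_add_one_ne_zero
  rw [scaledCentralBinom_succ]
  push_cast
  field_simp
  ring

theorem scaledBicatalan_zero_left (j : ℕ) :
    scaledBicatalan K 0 j = 2 * (scaledCentralBinom K j - scaledCentralBinom K (j + 1)) := by
  rw [scaledCentralBinom_sub_succ]
  simp [scaledBicatalan, scaledCentralBinom]

theorem scaledBicatalan_succ_left_sub (i j : ℕ) :
    scaledBicatalan K (i + 1) j - scaledBicatalan K i (j + 1) =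
      scaledCentralBinom K (i + 1) * (scaledCentralBinom K j / (j + 1 : ℕ)) := by
  have hi : (i + 1 : K) ≠ 0 := i.cast_add_one_ne_zero
  have hj : (j + 1 : K) ≠ 0 := j.cast_add_one_ne_zero
  have hij : (i + j + 2 : K) ≠ 0 := mod_cast (i + j + 1).succ_ne_zero
  rw [scaledBicatalan, scaledBicatalan, scaledCentralBinom_succ i, scaledCentralBinom_succ j,
    show i + 1 + j + 1 = i + j + 2 by ring, show i + (j + 1) + 1 = i + j + 2 by ring]
  push_cast
  field_simp
  ring

theorem scaledCentralBinom_mul_eq_scaledBicatalan (i j : ℕ) :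
    scaledCentralBinom K i * scaledCentralBinom K j =
      (i + j + 1 : ℕ) * ((2 * i + 1 : ℕ) : K)⁻¹ * scaledBicatalan K i j := by
  have hi : (2 * i + 1 : K) ≠ 0 := mod_cast (2 * i).succ_ne_zero
  have hij : (i + j + 1 : K) ≠ 0 := mod_cast (i + j).succ_ne_zero
  rw [scaledBicatalan]
  push_cast
  rw [mul_assoc (2 * (i : K) + 1), mul_assoc, mul_div_assoc, inv_mul_cancel_left₀ hi,
    mul_div_cancel₀ _ hij]

end CharZero

section Zsqrtd

theorem im_one_add_sqrtd_pow (d : ℤ) (n : ℕ) :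
    ((1 + Zsqrtd.sqrtd : ℤ√d) ^ n).im = ∑ i ∈ range n, n.choose (2 * i + 1) * d ^ i := by
  have sqrtd_pow_two_mul (i : ℕ) : (Zsqrtd.sqrtd : ℤ√d) ^ (2 * i) = (d ^ i : ℤ) := by
    rw [pow_mul, sq, Zsqrtd.dmuld, Int.cast_pow]
  rcases n.eq_zero_or_pos with rfl | hn
  · simp
  have binomial : (1 + Zsqrtd.sqrtd : ℤ√d) ^ n =
      ∑ k ∈ range (2 * n), (n.choose k : ℤ√d) * Zsqrtd.sqrtd ^ k := by
    rw [add_comm, add_pow]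
    refine (sum_subset (range_subset_range.2 (by lia)) fun k _ hk => ?_).trans
      (sum_congr rfl fun k _ => by ring)
    rw [Nat.choose_eq_zero_of_lt (by simpa using hk), Nat.cast_zero, mul_zero]
  have split : (1 + Zsqrtd.sqrtd : ℤ√d) ^ n =
      ((∑ i ∈ range n, n.choose (2 * i) * d ^ i : ℤ) : ℤ√d) +
        ((∑ i ∈ range n, n.choose (2 * i + 1) * d ^ i : ℤ) : ℤ√d) * Zsqrtd.sqrtd := by
    rw [binomial, sum_range_two_mul, sum_add_distrib]
    simp only [pow_succ, sqrtd_pow_two_mul]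
    push_cast
    simp only [sum_mul, mul_assoc]
  rw [split, Zsqrtd.im_add, Zsqrtd.im_mul]
  simp only [Zsqrtd.im_intCast, Zsqrtd.re_intCast, Zsqrtd.im_sqrtd, Zsqrtd.re_sqrtd]
  ring

theorem sum_choose_odd_mul_neg_three_pow_eq_zero {n : ℕ} (hn : 3 ∣ n) :
    ∑ i ∈ range n, (n.choose (2 * i + 1) : ℤ) * (-3) ^ i = 0 := by
  obtain ⟨t, rfl⟩ := hn
  have cube : (1 + Zsqrtd.sqrtd : ℤ√(-3)) ^ 3 = (-8 : ℤ) := by decide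
  rw [← im_one_add_sqrtd_pow, pow_mul, cube, ← Int.cast_pow, Zsqrtd.im_intCast]

end Zsqrtd

section Ultrametric

theorem norm_sub_le_of_norm_le {E : Type*} [SeminormedAddGroup E] [IsUltrametricDist E]
    {x y : E} {r : ℝ} (hx : ‖x‖ ≤ r) (hy : ‖y‖ ≤ r) : ‖x - y‖ ≤ r := by
  rw [sub_eq_add_neg]
  exact (norm_add_le_max _ _).trans (max_le hx (by rwa [norm_neg]))

theorem mul_norm_pow_sub_pow_le {R : Type*} [SeminormedCommRing R] [NormOneClass R]
    [IsUltrametricDist R] {x y : R} {r : ℝ} (hx : ‖x‖ ≤ r) (hy : ‖y‖ ≤ r) (n : ℕ) :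
    r * ‖x ^ n - y ^ n‖ ≤ r ^ n * ‖x - y‖ := by
  have hr : 0 ≤ r := (norm_nonneg x).trans hx
  induction n with
  | zero => simp
  | succ n ih =>
    have norm_mul_pow_sub_le : ‖x * (x ^ n - y ^ n)‖ ≤ r ^ n * ‖x - y‖ :=
      (norm_mul_le _ _).trans ((mul_le_mul_of_nonneg_right hx (norm_nonneg _)).trans ih)
    have norm_sub_mul_pow_le : ‖(y - x) * y ^ n‖ ≤ r ^ n * ‖x - y‖ := by
      rw [mul_comm, norm_sub_rev x y]
      refine (norm_mul_le _ _).trans (mul_le_mul_of_nonneg_right ?_ (norm_nonneg _))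
      exact (_root_.norm_pow_le _ _).trans (pow_le_pow_left₀ (norm_nonneg _) hy n)
    rw [show x ^ (n + 1) - y ^ (n + 1) = x * (x ^ n - y ^ n) - (y - x) * y ^ n by ring,
      pow_succ', mul_assoc]
    exact mul_le_mul_of_nonneg_left
      (norm_sub_le_of_norm_le norm_mul_pow_sub_le norm_sub_mul_pow_le) hr

end Ultrametric

theorem two_mul_add_one_sq_le_three_pow (n : ℕ) : (2 * n + 1) ^ 2 ≤ 3 ^ (n + 1) := by
  induction n with
  | zero => norm_num
  | succ n ih =>
    rcases n.eq_zero_or_pos with rfl | hn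
    · norm_num
    · rw [pow_succ 3]
      nlinarith

section Padic

variable {p : ℕ} [Fact p.Prime]

theorem norm_inv_natCast_le (n : ℕ) : ‖(n : ℚ_[p])⁻¹‖ ≤ n := by
  rcases n.eq_zero_or_pos with rfl | hn
  · simp
  rw [norm_inv, Padic.norm_eq_zpow_neg_valuation (mod_cast hn.ne'), Padic.valuation_natCast,
    zpow_neg, inv_inv, zpow_natCast]
  exact_mod_cast Nat.le_of_dvd hn pow_padicValNat_dvd

theorem norm_neg_one_pow_mul_choose_sub_one_le (n k : ℕ) :
    ‖(-1) ^ k * (n.choose k : ℚ_[p]) - 1‖ ≤ k * ‖((n + 1 : ℕ) : ℚ_[p])‖ := by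
  induction k with
  | zero => simp
  | succ k ih =>
    have hk : ((k + 1 : ℕ) : ℚ_[p]) ≠ 0 := mod_cast k.succ_ne_zero
    have pascal : (n.choose k + n.choose (k + 1) : ℚ_[p]) =
        ((k + 1 : ℕ) : ℚ_[p])⁻¹ * (n + 1 : ℕ) * n.choose k := by
      have h : ((n + 1 : ℕ) : ℚ_[p]) * n.choose k = (n + 1).choose (k + 1) * (k + 1 : ℕ) :=
        mod_cast n.add_one_mul_choose_eq k
      rw [mul_assoc, h, Nat.choose_succ_succ]
      field_simp
      push_cast
      ring
    have recursion : (-1) ^ (k + 1) * (n.choose (k + 1) : ℚ_[p]) - 1 =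
        ((-1) ^ k * n.choose k - 1) -
          (-1) ^ k * (((k + 1 : ℕ) : ℚ_[p])⁻¹ * (n + 1 : ℕ) * n.choose k) := by
      rw [← pascal]
      ring
    rw [recursion]
    refine norm_sub_le_of_norm_le (ih.trans ?_) ?_
    · gcongr
      exact k.le_succ
    · rw [norm_mul, norm_pow, norm_neg, norm_one, one_pow, one_mul, norm_mul, norm_mul]
      exact mul_le_of_le_one_right (by positivity) (norm_natCast_le_one _ _) |>.trans
        (mul_le_mul_of_nonneg_right (norm_inv_natCast_le _) (norm_nonneg _))

theorem norm_four_eq_one (hp : p ≠ 2) : ‖(4 : ℚ_[p])‖ = 1 := by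
  have coprime : p.Coprime (2 ^ 2) :=
    ((Nat.coprime_primes Fact.out Nat.prime_two).2 hp).pow_right 2
  exact_mod_cast Padic.norm_natCast_eq_one_iff.2 coprime

theorem norm_scaledCentralBinom_le_one (hp : p ≠ 2) (k : ℕ) : ‖scaledCentralBinom ℚ_[p] k‖ ≤ 1 := by
  rw [scaledCentralBinom, norm_div, norm_pow, norm_four_eq_one hp, one_pow, div_one]
  exact norm_natCast_le_one _ _

theorem norm_scaledBicatalan_le_one (hp : p ≠ 2) (i j : ℕ) : ‖scaledBicatalan ℚ_[p] i j‖ ≤ 1 := by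
  have norm_two_mul_sub_le (k : ℕ) :
      ‖2 * (scaledCentralBinom ℚ_[p] k - scaledCentralBinom ℚ_[p] (k + 1))‖ ≤ 1 := by
    rw [norm_mul]
    exact mul_le_one₀ (norm_natCast_le_one ℚ_[p] 2) (norm_nonneg _) <|
      norm_sub_le_of_norm_le (norm_scaledCentralBinom_le_one hp _)
        (norm_scaledCentralBinom_le_one hp _)
  induction i generalizing j with
  | zero => exact scaledBicatalan_zero_left (K := ℚ_[p]) j ▸ norm_two_mul_sub_le j
  | succ i ih =>
    rw [← sub_add_cancel (scaledBicatalan ℚ_[p] (i + 1) j) (scaledBicatalan ℚ_[p] i (j + 1)),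
      scaledBicatalan_succ_left_sub, ← scaledCentralBinom_sub_succ]
    refine (norm_add_le_max _ _).trans (max_le ?_ (ih _))
    rw [norm_mul]
    exact mul_le_one₀ (norm_scaledCentralBinom_le_one hp _) (norm_nonneg _) (norm_two_mul_sub_le j)

theorem norm_inv_mul_inv_le (i : ℕ) :
    ‖((i + 1 : ℕ) : ℚ_[p])⁻¹ * ((2 * i + 3 : ℕ) : ℚ_[p])⁻¹‖ ≤ (2 * i + 3 : ℕ) := by
  have partial_fractions : ((i + 1 : ℕ) : ℚ_[p])⁻¹ * ((2 * i + 3 : ℕ) : ℚ_[p])⁻¹ =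
      ((i + 1 : ℕ) : ℚ_[p])⁻¹ - (2 : ℕ) * ((2 * i + 3 : ℕ) : ℚ_[p])⁻¹ := by
    have h1 : ((i + 1 : ℕ) : ℚ_[p]) ≠ 0 := mod_cast i.succ_ne_zero
    have h2 : ((2 * i + 3 : ℕ) : ℚ_[p]) ≠ 0 := mod_cast (2 * i + 2).succ_ne_zero
    field_simp
    push_cast
    ring
  rw [partial_fractions]
  refine norm_sub_le_of_norm_le ((norm_inv_natCast_le _).trans ?_) ?_
  · exact_mod_cast (by lia : i + 1 ≤ 2 * i + 3)
  · rw [norm_mul]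
    exact (mul_le_of_le_one_left (norm_nonneg _) (norm_natCast_le_one _ _)).trans
      (norm_inv_natCast_le _)

theorem norm_scaledBicatalan_succ_left_sub_le (hp : p ≠ 2) (i j : ℕ) :
    ‖scaledBicatalan ℚ_[p] (i + 1) j - scaledBicatalan ℚ_[p] i (j + 1)‖ ≤
      (2 * i + 3 : ℕ) * ‖((i + j + 2 : ℕ) : ℚ_[p])‖ := by
  rcases le_or_gt ‖((i + 1 : ℕ) : ℚ_[p])‖ ‖((i + j + 2 : ℕ) : ℚ_[p])‖ with hle | hlt
  · calc
      _ ≤ (1 : ℝ) :=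
        norm_sub_le_of_norm_le (norm_scaledBicatalan_le_one hp _ _)
          (norm_scaledBicatalan_le_one hp _ _)
      _ = ‖((i + 1 : ℕ) : ℚ_[p])⁻¹‖ * ‖((i + 1 : ℕ) : ℚ_[p])‖ := by
        rw [← norm_mul, inv_mul_cancel₀ (mod_cast i.succ_ne_zero), norm_one]
      _ ≤ (i + 1 : ℕ) * ‖((i + j + 2 : ℕ) : ℚ_[p])‖ := by
        gcongr
        exact norm_inv_natCast_le _
      _ ≤ _ := mul_le_mul_of_nonneg_right
        (mod_cast (by lia : i + 1 ≤ 2 * i + 3)) (norm_nonneg _)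
  · have norm_eq : ‖((i + 1 : ℕ) : ℚ_[p])‖ = ‖((j + 1 : ℕ) : ℚ_[p])‖ := by
      refine norm_eq_of_add_norm_lt_max (lt_max_of_lt_left ?_)
      rwa [← Nat.cast_add, show i + 1 + (j + 1) = i + j + 2 by ring]
    rw [scaledBicatalan_succ_left_sub, mul_div_assoc', scaledCentralBinom_mul_eq_scaledBicatalan,
      show i + 1 + j + 1 = i + j + 2 by ring, show 2 * (i + 1) + 1 = 2 * i + 3 by ring]
    calc
      _ = ‖((i + 1 : ℕ) : ℚ_[p])⁻¹ * ((2 * i + 3 : ℕ) : ℚ_[p])⁻¹‖ * ‖((i + j + 2 : ℕ) : ℚ_[p])‖ *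
          ‖scaledBicatalan ℚ_[p] (i + 1) j‖ := by
        simp only [norm_mul, norm_div, norm_inv, norm_eq]
        ring
      _ ≤ (2 * i + 3 : ℕ) * ‖((i + j + 2 : ℕ) : ℚ_[p])‖ * 1 := by
        gcongr
        · exact norm_inv_mul_inv_le i
        · exact norm_scaledBicatalan_le_one hp _ _
      _ = _ := mul_one _

theorem norm_scaledBicatalan_sub_zero_left_le (hp : p ≠ 2) (i j : ℕ) :
    ‖scaledBicatalan ℚ_[p] i j - scaledBicatalan ℚ_[p] 0 (i + j)‖ ≤
      (2 * i + 1 : ℕ) * ‖((i + j + 1 : ℕ) : ℚ_[p])‖ := by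
  induction i generalizing j with
  | zero => simp
  | succ i ih =>
    have h := ih (j + 1)
    rw [show i + (j + 1) = i + 1 + j by ring] at h
    rw [← sub_add_sub_cancel _ (scaledBicatalan ℚ_[p] i (j + 1))]
    refine (norm_add_le_max _ _).trans (max_le ?_ (h.trans ?_))
    · rw [show i + 1 + j + 1 = i + j + 2 by ring]
      exact norm_scaledBicatalan_succ_left_sub_le hp i j
    · gcongr
      lia

theorem three_le_natCast_of_prime_ne_two (hp : p ≠ 2) : (3 : ℝ) ≤ p := by
  have h := (Fact.out : p.Prime).two_le
  exact_mod_cast (by lia : 3 ≤ p)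

theorem norm_mul_pow_le (hp : p ≠ 2) {w z : ℚ_[p]} (hw : ‖w‖ ≤ (p : ℝ)⁻¹) {i : ℕ} {r : ℝ}
    (hz : ‖z‖ ≤ (2 * i + 1 : ℕ) * r) : (2 * i + 1 : ℕ) * ‖z * w ^ i‖ ≤ p * r := by
  have three_le := three_le_natCast_of_prime_ne_two hp
  have hp₀ : (p : ℝ) ≠ 0 := by positivity
  have hr : 0 ≤ r := nonneg_of_mul_nonneg_right ((norm_nonneg z).trans hz) (by positivity)
  rw [norm_mul, norm_pow]
  calc
    _ ≤ (2 * i + 1 : ℕ) * ((2 * i + 1 : ℕ) * r * (p : ℝ)⁻¹ ^ i) := by gcongr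
    _ = ((2 * i + 1) ^ 2 : ℕ) * r * (p : ℝ)⁻¹ ^ i := by
      push_cast
      ring
    _ ≤ (p : ℝ) ^ (i + 1) * r * (p : ℝ)⁻¹ ^ i := by
      gcongr
      calc
        (((2 * i + 1) ^ 2 : ℕ) : ℝ) ≤ 3 ^ (i + 1) := mod_cast two_mul_add_one_sq_le_three_pow i
        _ ≤ (p : ℝ) ^ (i + 1) := by gcongr
    _ = p * r := by
      rw [pow_succ, inv_pow]
      field_simp

theorem norm_pow_sub_pow_le (hp : p ≠ 2) {w x : ℚ_[p]} (hw : ‖w‖ ≤ (p : ℝ)⁻¹)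
    (hx : ‖x‖ ≤ (p : ℝ)⁻¹) (i : ℕ) :
    (2 * i + 1 : ℕ) * ‖w ^ i - x ^ i‖ ≤ p * ‖w - x‖ := by
  have three_le := three_le_natCast_of_prime_ne_two hp
  have hp₀ : (p : ℝ) ≠ 0 := by positivity
  calc
    _ ≤ (p : ℝ) ^ i * ‖w ^ i - x ^ i‖ := by
      gcongr
      calc
        ((2 * i + 1 : ℕ) : ℝ) = 1 + i * 2 := by
          push_cast
          ring
        _ ≤ (1 + 2) ^ i := one_add_mul_le_pow (by norm_num) i
        _ ≤ (p : ℝ) ^ i := by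
          gcongr
          linarith
    _ = (p : ℝ) ^ (i + 1) * ((p : ℝ)⁻¹ * ‖w ^ i - x ^ i‖) := by
      rw [pow_succ]
      field_simp
    _ ≤ (p : ℝ) ^ (i + 1) * ((p : ℝ)⁻¹ ^ i * ‖w - x‖) :=
      mul_le_mul_of_nonneg_left (mul_norm_pow_sub_pow_le hw hx i) (by positivity)
    _ = p * ‖w - x‖ := by
      rw [pow_succ, inv_pow]
      field_simp

theorem norm_summand_sub_le (hp : p ≠ 2) {w x : ℚ_[p]} (hw : ‖w‖ ≤ (p : ℝ)⁻¹)
    (hx : ‖x‖ ≤ (p : ℝ)⁻¹) (i j : ℕ) :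
    ‖((2 * i + 1 : ℕ) : ℚ_[p])⁻¹ * (scaledBicatalan ℚ_[p] i j * w ^ i) -
        scaledBicatalan ℚ_[p] 0 (i + j) *
          (((2 * i + 1 : ℕ) : ℚ_[p])⁻¹ * ((i + j).choose (2 * i) * x ^ i))‖ ≤
      p * max ‖((i + j + 1 : ℕ) : ℚ_[p])‖ ‖w - x‖ := by
  have norm_inv_mul_le (z : ℚ_[p]) : ‖((2 * i + 1 : ℕ) : ℚ_[p])⁻¹ * z‖ ≤ (2 * i + 1 : ℕ) * ‖z‖ := by
    rw [norm_mul]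
    gcongr
    exact norm_inv_natCast_le _
  set A := scaledBicatalan ℚ_[p] i j
  set A₀ := scaledBicatalan ℚ_[p] 0 (i + j)
  have norm_A₀_mul_le (z : ℚ_[p]) : ‖A₀ * z‖ ≤ ‖z‖ := by
    rw [norm_mul]
    exact mul_le_of_le_one_left (norm_nonneg _) (norm_scaledBicatalan_le_one hp _ _)
  set u : ℚ_[p] := ((2 * i + 1 : ℕ) : ℚ_[p])⁻¹
  set b := ((i + j).choose (2 * i) : ℚ_[p])
  have norm_b_sub_one_le : ‖b - 1‖ ≤ (2 * i + 1 : ℕ) * ‖((i + j + 1 : ℕ) : ℚ_[p])‖ := by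
    have h := norm_neg_one_pow_mul_choose_sub_one_le (p := p) (i + j) (2 * i)
    rw [pow_mul, neg_one_sq, one_pow, one_mul] at h
    exact h.trans (mul_le_mul_of_nonneg_right (mod_cast (2 * i).le_succ) (norm_nonneg _))
  have replace_A : ‖u * ((A - A₀) * w ^ i)‖ ≤ p * ‖((i + j + 1 : ℕ) : ℚ_[p])‖ :=
    (norm_inv_mul_le _).trans (norm_mul_pow_le hp hw (norm_scaledBicatalan_sub_zero_left_le hp i j))
  have replace_w : ‖A₀ * (u * (w ^ i - x ^ i))‖ ≤ p * ‖w - x‖ :=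
    (norm_A₀_mul_le _).trans ((norm_inv_mul_le _).trans (norm_pow_sub_pow_le hp hw hx i))
  have insert_choose : ‖A₀ * (u * ((b - 1) * x ^ i))‖ ≤ p * ‖((i + j + 1 : ℕ) : ℚ_[p])‖ :=
    (norm_A₀_mul_le _).trans ((norm_inv_mul_le _).trans (norm_mul_pow_le hp hx norm_b_sub_one_le))
  rw [show u * (A * w ^ i) - A₀ * (u * (b * x ^ i)) = u * ((A - A₀) * w ^ i) +
      A₀ * (u * (w ^ i - x ^ i)) - A₀ * (u * ((b - 1) * x ^ i)) by ring,
    mul_max_of_nonneg _ _ p.cast_nonneg]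
  exact norm_sub_le_of_norm_le
    ((norm_add_le_max _ _).trans (max_le_max replace_A replace_w))
    (insert_choose.trans (le_max_left _ _))

theorem norm_one_sub_four_div_sub_neg_three (hp : p ≠ 2) {m : ℚ_[p]} (hm : ‖m - 1‖ < 1) :
    ‖1 - 4 / m - -3‖ = ‖m - 1‖ := by
  have norm_m : ‖m‖ = 1 :=
    (Padic.norm_eq_of_norm_sub_lt_right (hm.trans_eq norm_one.symm)).trans norm_one
  have m_ne_zero : m ≠ 0 := norm_ne_zero_iff.1 (norm_m ▸ one_ne_zero)
  rw [show 1 - 4 / m - -3 = 4 * (m - 1) / m by field_simp; ring, norm_div, norm_mul,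
    norm_four_eq_one hp, norm_m, one_mul, div_one]

end Padic

theorem norm_inv_mul_sum_choose_odd_mul_neg_three_pow_le (n : ℕ) :
    ‖(n : ℚ_[3])⁻¹ * ∑ i ∈ range n, (n.choose (2 * i + 1) : ℚ_[3]) * (-3) ^ i‖ ≤ ‖(n : ℚ_[3])‖ := by
  by_cases hn : 3 ∣ n
  · have h := congr_arg (Int.cast (R := ℚ_[3])) (sum_choose_odd_mul_neg_three_pow_eq_zero hn)
    push_cast at h
    simp [h]
  · have norm_n : ‖(n : ℚ_[3])‖ = 1 :=
      Padic.norm_natCast_eq_one_iff.2 ((Nat.Prime.coprime_iff_not_dvd Nat.prime_three).2 hn)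
    rw [norm_mul, norm_inv, norm_n, inv_one, one_mul]
    exact_mod_cast norm_intCast_le_one ℚ_[3] (∑ i ∈ range n, (n.choose (2 * i + 1) : ℤ) * (-3) ^ i)

theorem stmt_5_general (m : ℚ_[3]) (hm : ‖m - 1‖ < 1) (n : ℕ) (hn : 0 < n) :
    ‖(n : ℚ_[3])⁻¹ * ∑ k ∈ range n,
        (-1) ^ k * (Nat.choose (n - 1) k : ℚ_[3]) * (Nat.choose (2 * k) k : ℚ_[3]) / m ^ k‖ ≤
      3 * max ‖(n : ℚ_[3])‖ ‖m - 1‖ := by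
  obtain ⟨N, rfl⟩ := Nat.exists_eq_add_one.2 hn
  rw [N.add_sub_cancel, inv_mul_sum_choose_mul_centralBinom_div_pow]
  set w := 1 - 4 / m
  have norm_sub_eq : ‖w - -3‖ = ‖m - 1‖ :=
    norm_one_sub_four_div_sub_neg_three (by norm_num) hm
  have norm_neg_three : ‖(-3 : ℚ_[3])‖ = (3 : ℝ)⁻¹ := by simpa using Padic.norm_p (p := 3)
  have norm_w_le : ‖w‖ ≤ (3 : ℝ)⁻¹ := by
    rw [← sub_add_cancel w (-3)]
    refine (norm_add_le_max _ _).trans (max_le ?_ norm_neg_three.le)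
    rw [norm_sub_eq, ← zpow_neg_one]
    exact (Padic.norm_le_pow_iff_norm_lt_pow_add_one (m - 1) (-1)).2 (by simpa)
  have approx : ‖∑ ij ∈ antidiagonal N,
        ((2 * ij.1 + 1 : ℕ) : ℚ_[3])⁻¹ * (scaledBicatalan ℚ_[3] ij.1 ij.2 * w ^ ij.1) -
      scaledBicatalan ℚ_[3] 0 N * (((N + 1 : ℕ) : ℚ_[3])⁻¹ *
        ∑ i ∈ range (N + 1), ((N + 1).choose (2 * i + 1) : ℚ_[3]) * (-3) ^ i)‖ ≤
      3 * max ‖((N + 1 : ℕ) : ℚ_[3])‖ ‖m - 1‖ := by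
    rw [inv_mul_sum_choose_odd_mul_pow, mul_sum, ← sum_sub_distrib, ← norm_sub_eq]
    refine norm_sum_le_of_forall_le_of_nonneg (by positivity) fun ij hij => ?_
    rw [← HasAntidiagonal.mem_antidiagonal.1 hij]
    exact norm_summand_sub_le (by norm_num) norm_w_le norm_neg_three.le ij.1 ij.2
  have main_term : ‖scaledBicatalan ℚ_[3] 0 N * (((N + 1 : ℕ) : ℚ_[3])⁻¹ *
      ∑ i ∈ range (N + 1), ((N + 1).choose (2 * i + 1) : ℚ_[3]) * (-3) ^ i)‖ ≤
      3 * max ‖((N + 1 : ℕ) : ℚ_[3])‖ ‖m - 1‖ := by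
    rw [norm_mul]
    refine (mul_le_of_le_one_left (norm_nonneg _)
      (norm_scaledBicatalan_le_one (by norm_num) 0 N)).trans ?_
    refine (norm_inv_mul_sum_choose_odd_mul_neg_three_pow_le (N + 1)).trans ?_
    linarith [le_max_left ‖((N + 1 : ℕ) : ℚ_[3])‖ ‖m - 1‖, norm_nonneg ((N + 1 : ℕ) : ℚ_[3])]
  rw [← sub_add_cancel (∑ ij ∈ antidiagonal N, _) (scaledBicatalan ℚ_[3] 0 N * _)]
  exact (norm_add_le_max _ _).trans (max_le approx main_term)

/-- Sun's conjecture (ii), first part: for `m ≡ 1 (mod 3)` and `n ≥ 1`,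
`ν₃((1/n)·∑_{k<n} (−1)^k C(n−1,k) C(2k,k)/m^k) ≥ min{ν₃(n), ν₃(m−1)} − 1`
(with `ν₃(0) = ∞`), expressed via the 3-adic norm in `ℚ_[3]`. -/
theorem stmt_5 (m : ℤ) (hm : m ≡ 1 [ZMOD 3]) (n : ℕ) (hn : 0 < n) (e : ℕ)
    (he : (e : ℕ∞) ≤ min (padicValNat 3 n : ℕ∞) (emultiplicity (3 : ℤ) (m - 1))) :
    ‖((n : ℚ_[3]))⁻¹ * ∑ k ∈ Finset.range n,
        (-1) ^ k * (Nat.choose (n - 1) k : ℚ_[3]) * (Nat.choose (2 * k) k : ℚ_[3]) /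
          (m : ℚ_[3]) ^ k‖ ≤ (3 : ℝ) ^ (1 - (e : ℤ)) := by
  have norm_sub_one_lt : ‖(m - 1 : ℚ_[3])‖ < 1 :=
    mod_cast Padic.norm_intCast_lt_one_iff.2 hm.symm.dvd
  have norm_sub_one_le : ‖(m - 1 : ℚ_[3])‖ ≤ (3 : ℝ) ^ (-(e : ℤ)) :=
    mod_cast (Padic.norm_int_le_pow_iff_dvd (p := 3) (m - 1) e).2
      (mod_cast pow_dvd_of_le_emultiplicity (he.trans (min_le_right _ _)))
  have norm_n_le : ‖(n : ℚ_[3])‖ ≤ (3 : ℝ) ^ (-(e : ℤ)) := by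
    have h : e ≤ padicValNat 3 n := mod_cast he.trans (min_le_left _ _)
    exact_mod_cast (Padic.norm_int_le_pow_iff_dvd (p := 3) n e).2
      (mod_cast (padicValNat_dvd_iff_le hn.ne').2 h)
  calc
    _ ≤ 3 * max ‖(n : ℚ_[3])‖ ‖(m - 1 : ℚ_[3])‖ := stmt_5_general m norm_sub_one_lt n hn
    _ ≤ 3 * 3 ^ (-(e : ℤ)) := by
      gcongr
      exact max_le norm_n_le norm_sub_one_le
    _ = 3 ^ (1 - (e : ℤ)) := by rw [sub_eq_add_neg, zpow_one_add₀ three_ne_zero]
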